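/- arXiv:1302.3784 — 3 statements merged into one kernel-verified Lean document; each statement's English description precedes it below -/
import Mathlib

section
/- Closed form of the dual function via greedy primal updates: suppose every 𝒰_m and every 𝒰_p is nonempty, and let (λ, μ, β, α) be nonnegative multipliers with λ_u > 0 for all u. Then D(λ, μ, β, α) := sup { L(x, y^A, y^{nA}, A, N, R) : (x, y^A, y^{nA}, A, N) ∈ Π, R_u > 0 } is finite and equals Σ_{u∈𝒰} (w_u ln(w_u/λ_u) − w_u) + Σ_{m∈ℳ} [ N_sf·max(0, β_m − Σ_{p : m∈I_p} μ_{p,m}) + N_sf·max(0, max_{u∈𝒰_m}(λ_u r_u^macro − β_m)) ] + Σ_{p∈𝒫} [ N_sf·max(0, β_p − Σ_{m∈I_p} μ_{p,m}) + N_sf·max(0, max_{u∈𝒰_p}(λ_u r_u^{pico,ABS} − β_p − α_p)) + N_sf·max(0, max_{u∈𝒰_p}(λ_u r_u^{pico} − α_p)) ] + N_sf (Σ_{p∈𝒫} Σ_{m∈I_p} μ_{p,m} + Σ_{p∈𝒫} α_p). -/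
open Finset

/-- The Lagrangian of the RELAXED-ABS problem. -/
noncomputable def Lag {U M P : Type*} [Fintype U] [Fintype M] [Fintype P]
    [DecidableEq M] [DecidableEq P]
    (mu : U → M) (pu : U → P) (rMac rPicoABS rPico w : U → ℝ)
    (Ip : P → Finset M) (Nsf : ℕ)
    (x yA ynA R : U → ℝ) (A : P → ℝ) (N : M → ℝ)
    (lam : U → ℝ) (μ : P → M → ℝ) (βM : M → ℝ) (βP αP : P → ℝ) : ℝ :=
  ∑ u, w u * Real.log (R u)
    - ∑ u, lam u * (R u - rMac u * x u - rPicoABS u * yA u - rPico u * ynA u)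
    - ∑ p, ∑ m ∈ Ip p, μ p m * (A p + N m - (Nsf : ℝ))
    - ∑ m, βM m * ((∑ u ∈ univ.filter (fun u => mu u = m), x u) - N m)
    - ∑ p, βP p * ((∑ u ∈ univ.filter (fun u => pu u = p), yA u) - A p)
    - ∑ p, αP p * ((∑ u ∈ univ.filter (fun u => pu u = p), (yA u + ynA u)) - (Nsf : ℝ))

/-- Membership in the compact region `Π` over which the dual function is defined. -/
def InPi {U M P : Type*} [Fintype U] [Fintype M] [Fintype P]
    [DecidableEq M] [DecidableEq P]
    (mu : U → M) (pu : U → P) (Nsf : ℕ)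
    (x yA ynA : U → ℝ) (A : P → ℝ) (N : M → ℝ) : Prop :=
  (∀ u, 0 ≤ x u) ∧ (∀ u, 0 ≤ yA u) ∧ (∀ u, 0 ≤ ynA u) ∧
  (∀ p, 0 ≤ A p) ∧ (∀ m, 0 ≤ N m) ∧
  (∀ p, A p ≤ (Nsf : ℝ)) ∧ (∀ m, N m ≤ (Nsf : ℝ)) ∧
  (∀ m, ∑ u ∈ univ.filter (fun u => mu u = m), x u ≤ (Nsf : ℝ)) ∧
  (∀ p, ∑ u ∈ univ.filter (fun u => pu u = p), yA u ≤ (Nsf : ℝ)) ∧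
  (∀ p, ∑ u ∈ univ.filter (fun u => pu u = p), ynA u ≤ (Nsf : ℝ))

/-!
Collecting the Lagrangian by primal variables makes it a sum of six functions, each of its own
block of variables, over a region that is a product in these blocks; hence each block can be
maximized on its own. The rate of a user solves `max (w log R - λ R)`, at `R = w / λ`. The
remaining blocks are linear: `A_p` and `N_m` range over `[0, N_sf]`, and the time `N_sf` of a cell
is best given entirely to a user of largest coefficient, or to nobody if no coefficient is positive.
-/

/-- The ways of dividing at most `n` units of a resource among the members of the cell `s`;
entries outside `s` are unconstrained. The blocks `x`, `yA`, `ynA` of `Π` are the vectors that lie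
in this set for every cell. -/
def allocations {U 𝕜 : Type*} [AddCommMonoid 𝕜] [LE 𝕜] (s : Finset U) (n : 𝕜) : Set (U → 𝕜) :=
  {x | (∀ u ∈ s, 0 ≤ x u) ∧ ∑ u ∈ s, x u ≤ n}

theorem isGreatest_image_sum_pi {ι β : Type*} {α : ι → Type*} [Fintype ι]
    [AddCommMonoid β] [Preorder β] [AddLeftMono β] {f : ∀ i, α i → β} {s : ∀ i, Set (α i)}
    {a : ι → β} (h : ∀ i, IsGreatest (f i '' s i) (a i)) :
    IsGreatest ((fun x => ∑ i, f i (x i)) '' Set.univ.pi s) (∑ i, a i) := by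
  constructor
  · choose x hx hxa using fun i => (h i).1
    exact ⟨x, fun i _ => hx i, Finset.sum_congr rfl fun i _ => hxa i⟩
  · rintro _ ⟨x, hx, rfl⟩
    exact Finset.sum_le_sum fun i _ => (h i).2 (Set.mem_image_of_mem _ (hx i trivial))

theorem forall_mem_allocations_fiber_iff {U M 𝕜 : Type*} [Fintype U] [DecidableEq M]
    [AddCommMonoid 𝕜] [LE 𝕜] {g : U → M} {n : 𝕜} {x : U → 𝕜} :
    (∀ m, x ∈ allocations (univ.filter (fun u => g u = m)) n) ↔
      (∀ u, 0 ≤ x u) ∧ ∀ m, ∑ u ∈ univ.filter (fun u => g u = m), x u ≤ n := by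
  simp only [allocations, Set.mem_ofPred_eq, Finset.mem_filter_univ, forall_and]
  rw [forall_comm]
  simp only [forall_eq']

section LinearPrograms

variable {𝕜 : Type*} [CommRing 𝕜] [LinearOrder 𝕜] [IsOrderedRing 𝕜] {n : 𝕜}

theorem isGreatest_image_mul_Icc (hn : 0 ≤ n) (a : 𝕜) :
    IsGreatest ((a * ·) '' Set.Icc 0 n) (n * max 0 a) := by
  constructor
  · rcases le_total a 0 with ha | ha
    · exact ⟨0, Set.left_mem_Icc.2 hn, by simp [ha]⟩
    · exact ⟨n, Set.right_mem_Icc.2 hn, by simp [ha, mul_comm]⟩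
  · rintro _ ⟨t, ⟨ht, htn⟩, rfl⟩
    calc a * t ≤ max 0 a * t := mul_le_mul_of_nonneg_right (le_max_right 0 a) ht
      _ ≤ max 0 a * n := mul_le_mul_of_nonneg_left htn (le_max_left 0 a)
      _ = n * max 0 a := mul_comm _ _

theorem isGreatest_image_sum_mul_allocations {U : Type*} {s : Finset U} (hs : s.Nonempty)
    (hn : 0 ≤ n) (f : U → 𝕜) :
    IsGreatest ((fun x => ∑ u ∈ s, f u * x u) '' allocations s n) (n * max 0 (s.sup' hs f)) := by
  classical
  have hbox := isGreatest_image_mul_Icc hn (s.sup' hs f)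
  constructor
  · obtain ⟨t, ht, hval⟩ := hbox.1
    obtain ⟨v, hv, hsup⟩ := Finset.exists_mem_eq_sup' hs f
    have hsingle : (0 : U → 𝕜) ≤ Pi.single v t := Pi.single_nonneg.2 ht.1
    refine ⟨Pi.single v t, ⟨fun u _ => hsingle u, ?_⟩, ?_⟩
    · simpa [Finset.sum_pi_single, hv] using ht.2
    · simpa [Pi.single_apply, hv, hsup] using hval
  · rintro _ ⟨x, ⟨hx, hxn⟩, rfl⟩
    calc ∑ u ∈ s, f u * x u ≤ ∑ u ∈ s, s.sup' hs f * x u :=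
          Finset.sum_le_sum fun u hu =>
            mul_le_mul_of_nonneg_right (Finset.le_sup' f hu) (hx u hu)
      _ = s.sup' hs f * ∑ u ∈ s, x u := (Finset.mul_sum ..).symm
      _ ≤ n * max 0 (s.sup' hs f) :=
          hbox.2 (Set.mem_image_of_mem _ ⟨Finset.sum_nonneg hx, hxn⟩)

theorem isGreatest_image_sum_fiberwise_allocations {U M : Type*} [Fintype U] [Fintype M]
    [DecidableEq M] {g : U → M} (hg : ∀ m, (univ.filter (fun u => g u = m)).Nonempty)
    (hn : 0 ≤ n) (f : M → U → 𝕜) :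
    IsGreatest ((fun x => ∑ m, ∑ u ∈ univ.filter (fun u => g u = m), f m u * x u) ''
        {x | ∀ m, x ∈ allocations (univ.filter (fun u => g u = m)) n})
      (∑ m, n * max 0 ((univ.filter (fun u => g u = m)).sup' (hg m) (f m))) := by
  have hcells := isGreatest_image_sum_pi fun m =>
    isGreatest_image_sum_mul_allocations (hg m) hn (f m)
  constructor
  · obtain ⟨X, hX, hval⟩ := hcells.1
    have glue : ∀ m, ∀ u ∈ univ.filter (fun u => g u = m), X (g u) u = X m u := by
      intro m u hu
      rw [(Finset.mem_filter.1 hu).2]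
    refine ⟨fun u => X (g u) u, fun m => ⟨fun u hu => ?_, ?_⟩, ?_⟩
    · exact ((hX m trivial).1 u hu).trans_eq (glue m u hu).symm
    · exact (Finset.sum_congr rfl (glue m)).trans_le (hX m trivial).2
    · rw [← hval]
      exact Finset.sum_congr rfl fun m _ =>
        Finset.sum_congr rfl fun u hu => congrArg (f m u * ·) (glue m u hu)
  · rintro _ ⟨x, hx, rfl⟩
    exact hcells.2 ⟨fun _ => x, fun m _ => hx m, rfl⟩

end LinearPrograms

theorem isGreatest_image_mul_log_sub_mul {w l : ℝ} (hw : 0 < w) (hl : 0 < l) :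
    IsGreatest ((fun R => w * Real.log R - l * R) '' Set.Ioi 0) (w * Real.log (w / l) - w) := by
  constructor
  · exact ⟨w / l, div_pos hw hl, by simp only [mul_div_cancel₀ w hl.ne']⟩
  · rintro _ ⟨R, hR : 0 < R, rfl⟩
    have hlog : Real.log R - Real.log (w / l) ≤ R / (w / l) - 1 := by
      rw [← Real.log_div hR.ne' (div_pos hw hl).ne']
      exact Real.log_le_sub_one_of_pos (div_pos hR (div_pos hw hl))
    have hscaled : w * (R / (w / l) - 1) = l * R - w := by field_simp
    linarith [mul_le_mul_of_nonneg_left hlog hw.le]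

section Lagrangian

variable {U M P : Type*} [Fintype U] [Fintype M] [Fintype P] [DecidableEq M] [DecidableEq P]
  (mu : U → M) (pu : U → P) (Nsf : ℕ) (x yA ynA : U → ℝ) (A : P → ℝ) (N : M → ℝ)

theorem inPi_iff :
    InPi mu pu Nsf x yA ynA A N ↔
      (∀ m, x ∈ allocations (univ.filter (fun u => mu u = m)) (Nsf : ℝ)) ∧
      (∀ p, yA ∈ allocations (univ.filter (fun u => pu u = p)) (Nsf : ℝ)) ∧
      (∀ p, ynA ∈ allocations (univ.filter (fun u => pu u = p)) (Nsf : ℝ)) ∧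
      A ∈ Set.univ.pi (fun _ => Set.Icc 0 (Nsf : ℝ)) ∧
      N ∈ Set.univ.pi (fun _ => Set.Icc 0 (Nsf : ℝ)) := by
  simp only [InPi, forall_mem_allocations_fiber_iff, Set.mem_univ_pi, Set.mem_Icc, forall_and]
  tauto

theorem Lag_eq_sum_blocks (rMac rPicoABS rPico w : U → ℝ) (Ip : P → Finset M) (R : U → ℝ)
    (lam : U → ℝ) (μ : P → M → ℝ) (βM : M → ℝ) (βP αP : P → ℝ) :
    Lag mu pu rMac rPicoABS rPico w Ip Nsf x yA ynA R A N lam μ βM βP αP =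
      ∑ u, (w u * Real.log (R u) - lam u * R u)
      + (∑ m, (βM m - ∑ p ∈ univ.filter (fun p => m ∈ Ip p), μ p m) * N m
        + ∑ m, ∑ u ∈ univ.filter (fun u => mu u = m), (lam u * rMac u - βM m) * x u)
      + (∑ p, (βP p - ∑ m ∈ Ip p, μ p m) * A p
        + ∑ p, ∑ u ∈ univ.filter (fun u => pu u = p),
            (lam u * rPicoABS u - βP p - αP p) * yA u
        + ∑ p, ∑ u ∈ univ.filter (fun u => pu u = p), (lam u * rPico u - αP p) * ynA u)
      + (Nsf : ℝ) * ((∑ p, ∑ m ∈ Ip p, μ p m) + ∑ p, αP p) := by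
  have macro_rates := Finset.sum_fiberwise univ mu (fun u => lam u * rMac u * x u)
  have abs_rates := Finset.sum_fiberwise univ pu (fun u => lam u * rPicoABS u * yA u)
  have nonabs_rates := Finset.sum_fiberwise univ pu (fun u => lam u * rPico u * ynA u)
  have interference : ∑ p, ∑ m ∈ Ip p, μ p m * N m
      = ∑ m, ∑ p ∈ univ.filter (fun p => m ∈ Ip p), μ p m * N m :=
    Finset.sum_comm' (by simp)
  simp only [Lag, sub_mul, mul_sub, mul_add, Finset.sum_sub_distrib, Finset.sum_add_distrib,
    Finset.mul_sum, Finset.sum_mul, ← mul_assoc]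
  rw [← macro_rates, ← abs_rates, ← nonabs_rates, interference]
  simp only [mul_comm (Nsf : ℝ)]
  ring

end Lagrangian

theorem stmt_7_general {U M P : Type*} [Fintype U] [Fintype M] [Fintype P]
    [DecidableEq M] [DecidableEq P]
    (mu : U → M) (pu : U → P) (rMac rPicoABS rPico w : U → ℝ) (hw : ∀ u, 0 < w u)
    (Ip : P → Finset M) (Nsf : ℕ)
    (hUm : ∀ m : M, (univ.filter (fun u => mu u = m)).Nonempty)
    (hUp : ∀ p : P, (univ.filter (fun u => pu u = p)).Nonempty)
    (lam : U → ℝ) (μ : P → M → ℝ) (βM : M → ℝ) (βP αP : P → ℝ) (hlam : ∀ u, 0 < lam u) :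
    IsGreatest
      {v : ℝ | ∃ x yA ynA A N, InPi mu pu Nsf x yA ynA A N ∧
        ∃ R : U → ℝ, (∀ u, 0 < R u) ∧
          v = Lag mu pu rMac rPicoABS rPico w Ip Nsf x yA ynA R A N lam μ βM βP αP}
      ((∑ u, (w u * Real.log (w u / lam u) - w u))
        + (∑ m, ((Nsf : ℝ) * max 0 (βM m - ∑ p ∈ univ.filter (fun p => m ∈ Ip p), μ p m)
            + (Nsf : ℝ) * max 0 ((univ.filter (fun u => mu u = m)).sup' (hUm m)
                (fun u => lam u * rMac u - βM m))))
        + (∑ p, ((Nsf : ℝ) * max 0 (βP p - ∑ m ∈ Ip p, μ p m)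
            + (Nsf : ℝ) * max 0 ((univ.filter (fun u => pu u = p)).sup' (hUp p)
                (fun u => lam u * rPicoABS u - βP p - αP p))
            + (Nsf : ℝ) * max 0 ((univ.filter (fun u => pu u = p)).sup' (hUp p)
                (fun u => lam u * rPico u - αP p))))
        + (Nsf : ℝ) * ((∑ p, ∑ m ∈ Ip p, μ p m) + ∑ p, αP p)) := by
  have hn : (0 : ℝ) ≤ Nsf := Nat.cast_nonneg _
  have max_R := isGreatest_image_sum_pi fun u => isGreatest_image_mul_log_sub_mul (hw u) (hlam u)
  have max_N := isGreatest_image_sum_pi fun m =>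
    isGreatest_image_mul_Icc hn (βM m - ∑ p ∈ univ.filter (fun p => m ∈ Ip p), μ p m)
  have max_A := isGreatest_image_sum_pi fun p =>
    isGreatest_image_mul_Icc hn (βP p - ∑ m ∈ Ip p, μ p m)
  have max_x := isGreatest_image_sum_fiberwise_allocations hUm hn
    fun m u => lam u * rMac u - βM m
  have max_yA := isGreatest_image_sum_fiberwise_allocations hUp hn
    fun p u => lam u * rPicoABS u - βP p - αP p
  have max_ynA := isGreatest_image_sum_fiberwise_allocations hUp hn
    fun p u => lam u * rPico u - αP p
  simp only [inPi_iff, Lag_eq_sum_blocks, Finset.sum_add_distrib]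
  constructor
  · obtain ⟨R, hR, eR⟩ := max_R.1
    obtain ⟨N, hN, eN⟩ := max_N.1
    obtain ⟨A, hA, eA⟩ := max_A.1
    obtain ⟨x, hx, ex⟩ := max_x.1
    obtain ⟨yA, hyA, eyA⟩ := max_yA.1
    obtain ⟨ynA, hynA, eynA⟩ := max_ynA.1
    refine ⟨x, yA, ynA, A, N, ⟨hx, hyA, hynA, hA, hN⟩, R, fun u => hR u trivial, ?_⟩
    rw [← eR, ← eN, ← eA, ← ex, ← eyA, ← eynA]
  · rintro _ ⟨x, yA, ynA, A, N, ⟨hx, hyA, hynA, hA, hN⟩, R, hR, rfl⟩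
    gcongr ?_ + (?_ + ?_) + (?_ + ?_ + ?_) + _
    exacts [max_R.2 ⟨R, fun u _ => hR u, rfl⟩, max_N.2 ⟨N, hN, rfl⟩, max_x.2 ⟨x, hx, rfl⟩,
      max_A.2 ⟨A, hA, rfl⟩, max_yA.2 ⟨yA, hyA, rfl⟩, max_ynA.2 ⟨ynA, hynA, rfl⟩]

/-- Closed form of the dual function via greedy primal updates: if every `𝒰_m` and
every `𝒰_p` is nonempty and the multipliers are nonnegative with `λ_u > 0`, then the
dual function `D(λ,μ,β,α) = sup_{Π, R > 0} L` is finite and equals the explicit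
expression obtained from the per-UE, per-macro and per-pico greedy maximizations. -/
theorem stmt_7 {U M P : Type*} [Fintype U] [Fintype M] [Fintype P]
    [DecidableEq M] [DecidableEq P]
    (mu : U → M) (pu : U → P) (rMac rPicoABS rPico w : U → ℝ)
    (hrMac : ∀ u, 0 < rMac u) (hrPicoABS : ∀ u, 0 < rPicoABS u)
    (hrPico : ∀ u, 0 < rPico u) (hw : ∀ u, 0 < w u)
    (Ip : P → Finset M) (Nsf : ℕ) (hNsf : 0 < Nsf)
    (hUm : ∀ m : M, (univ.filter (fun u => mu u = m)).Nonempty)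
    (hUp : ∀ p : P, (univ.filter (fun u => pu u = p)).Nonempty)
    (lam : U → ℝ) (μ : P → M → ℝ) (βM : M → ℝ) (βP αP : P → ℝ)
    (hlam : ∀ u, 0 < lam u) (hμ : ∀ p m, 0 ≤ μ p m)
    (hβM : ∀ m, 0 ≤ βM m) (hβP : ∀ p, 0 ≤ βP p) (hαP : ∀ p, 0 ≤ αP p) :
    IsLUB
      {v : ℝ | ∃ x yA ynA A N, InPi mu pu Nsf x yA ynA A N ∧
        ∃ R : U → ℝ, (∀ u, 0 < R u) ∧
          v = Lag mu pu rMac rPicoABS rPico w Ip Nsf x yA ynA R A N lam μ βM βP αP}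
      ((∑ u, (w u * Real.log (w u / lam u) - w u))
        + (∑ m, ((Nsf : ℝ) * max 0 (βM m - ∑ p ∈ univ.filter (fun p => m ∈ Ip p), μ p m)
            + (Nsf : ℝ) * max 0 ((univ.filter (fun u => mu u = m)).sup' (hUm m)
                (fun u => lam u * rMac u - βM m))))
        + (∑ p, ((Nsf : ℝ) * max 0 (βP p - ∑ m ∈ Ip p, μ p m)
            + (Nsf : ℝ) * max 0 ((univ.filter (fun u => pu u = p)).sup' (hUp p)
                (fun u => lam u * rPicoABS u - βP p - αP p))
            + (Nsf : ℝ) * max 0 ((univ.filter (fun u => pu u = p)).sup' (hUp p)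
                (fun u => lam u * rPico u - αP p))))
        + (Nsf : ℝ) * ((∑ p, ∑ m ∈ Ip p, μ p m) + ∑ p, αP p)) :=
  (stmt_7_general mu pu rMac rPicoABS rPico w hw Ip Nsf hUm hUp lam μ βM βP αP hlam).isLUB
end

section
/- Rounding preserves the interference constraint: let N_sf be an even positive integer and let a, b be real numbers with 0 ≤ a ≤ N_sf, 0 ≤ b ≤ N_sf, and a + b ≤ N_sf. Then Rnd_{N_sf}(a) + Rnd_{N_sf}(b) ≤ N_sf. -/
/-- The rounding function `Rnd_{N_sf}` : round down if `x ≥ N_sf / 2`, round up otherwise. -/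
noncomputable def Rnd (Nsf : ℕ) (x : ℝ) : ℤ :=
  if (Nsf : ℝ) / 2 ≤ x then ⌊x⌋ else ⌈x⌉

/-! If the larger of the two numbers is at least `N_sf / 2`, it is rounded down, which leaves room
for the other one to be rounded up, since `N_sf` is an integer. Otherwise both numbers lie below
`N_sf / 2`, which is itself an integer because `N_sf` is even, so rounding up cannot carry either
of them past it. -/

theorem floor_add_ceil_le_of_add_le {R : Type*} [Ring R] [LinearOrder R] [IsOrderedRing R]
    [FloorRing R] {x y : R} {n : ℤ} (h : x + y ≤ n) : ⌊x⌋ + ⌈y⌉ ≤ n := by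
  have h_add : (⌊x⌋ : R) + y ≤ n := (add_le_add_left (Int.floor_le x) y).trans h
  rw [← Int.ceil_intCast_add]
  exact Int.ceil_le.mpr h_add

theorem rnd_of_half_le {N : ℕ} {x : ℝ} (h : (N : ℝ) / 2 ≤ x) : Rnd N x = ⌊x⌋ :=
  if_pos h

theorem rnd_le_ceil (N : ℕ) (x : ℝ) : Rnd N x ≤ ⌈x⌉ := by
  unfold Rnd
  split_ifs
  exacts [Int.floor_le_ceil x, le_rfl]

theorem rnd_le_of_le_intCast (N : ℕ) {x : ℝ} {n : ℤ} (h : x ≤ n) : Rnd N x ≤ n :=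
  (rnd_le_ceil N x).trans (Int.ceil_le.mpr h)

theorem rnd_add_rnd_le_of_half_le {N : ℕ} {x y : ℝ} {n : ℤ} (hx : (N : ℝ) / 2 ≤ x)
    (h : x + y ≤ n) : Rnd N x + Rnd N y ≤ n :=
  calc
    Rnd N x + Rnd N y = ⌊x⌋ + Rnd N y := by rw [rnd_of_half_le hx]
    _ ≤ ⌊x⌋ + ⌈y⌉ := by gcongr; exact rnd_le_ceil N y
    _ ≤ n := floor_add_ceil_le_of_add_le h

theorem stmt_8_general (Nsf : ℕ) (heven : Even Nsf) (a b : ℝ) (hab : a + b ≤ Nsf) :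
    Rnd Nsf a + Rnd Nsf b ≤ (Nsf : ℤ) := by
  wlog hba : b ≤ a generalizing a b
  · rw [add_comm]
    exact this b a (by rwa [add_comm]) (le_of_not_ge hba)
  rcases le_or_gt ((Nsf : ℝ) / 2) a with ha | ha
  · exact rnd_add_rnd_le_of_half_le ha (mod_cast hab)
  · obtain ⟨k, rfl⟩ := heven
    have hak : a ≤ (k : ℤ) := by push_cast at ha ⊢; linarith
    push_cast
    exact add_le_add (rnd_le_of_le_intCast _ hak) (rnd_le_of_le_intCast _ (hba.trans hak))

/-- Rounding preserves the interference constraint: for an even positive integer `N_sf`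
and reals `0 ≤ a ≤ N_sf`, `0 ≤ b ≤ N_sf` with `a + b ≤ N_sf`, we have
`Rnd_{N_sf}(a) + Rnd_{N_sf}(b) ≤ N_sf`. -/
theorem stmt_8 (Nsf : ℕ) (hpos : 0 < Nsf) (heven : Even Nsf) (a b : ℝ)
    (ha0 : 0 ≤ a) (ha1 : a ≤ Nsf) (hb0 : 0 ≤ b) (hb1 : b ≤ Nsf)
    (hab : a + b ≤ Nsf) :
    Rnd Nsf a + Rnd Nsf b ≤ (Nsf : ℤ) :=
  stmt_8_general Nsf heven a b hab
end

section
/- Airtime preservation under rounding: in the setting of the Algorithm 2 construction, assume additionally N_sf ≥ 4. Then for every macro-associated UE u, the scaled airtime satisfies x_u* ≥ x̂_u / 2, and for every pico-associated UE u, the scaled ABS airtime satisfies y_u^{A*} ≥ ŷ_u^A / 2. -/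
open Finset

/-!
Each UE has its relaxed airtime multiplied by `Rnd B / X`, where `B` is the relaxed budget of its
cell and `X ≤ B` is the part of that budget used by the UEs associated with the cell. So it is
enough that rounding keeps at least half of a budget, `B / 2 ≤ Rnd B`: a budget is rounded down
only if it is at least `N_sf / 2 ≥ 1`, and then `B / 2 < ⌊B⌋`.
-/

lemma half_le_Rnd {N : ℕ} (hN : 2 ≤ N) {x : ℝ} (hx : 0 ≤ x) : x / 2 ≤ Rnd N x := by
  unfold Rnd
  split_ifs with hNx
  · have hN' : (2 : ℝ) ≤ N := by exact_mod_cast hN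
    have one_le_x : 1 ≤ x := by linarith
    exact (Int.div_two_lt_floor one_le_x).le
  · exact (half_le_self hx).trans (Int.le_ceil x)

lemma half_le_mul_Rnd_div_sum {ι : Type*} {N : ℕ} (hN : 2 ≤ N) {s t : Finset ι} (hst : s ⊆ t)
    {a : ι → ℝ} (ha : ∀ i ∈ t, 0 ≤ a i) {B : ℝ} (hB : ∑ i ∈ t, a i ≤ B)
    (hpos : 0 < ∑ i ∈ s, a i) {i : ι} (hi : i ∈ t) :
    a i / 2 ≤ a i * Rnd N B / ∑ j ∈ s, a j := by
  have sum_le_B : ∑ j ∈ s, a j ≤ B :=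
    (sum_le_sum_of_subset_of_nonneg hst fun j hj _ ↦ ha j hj).trans hB
  have half_sum_le_Rnd : (∑ j ∈ s, a j) / 2 ≤ Rnd N B :=
    (div_le_div_of_nonneg_right sum_le_B zero_le_two).trans
      (half_le_Rnd hN (hpos.le.trans sum_le_B))
  rw [le_div_iff₀ hpos]
  calc a i / 2 * ∑ j ∈ s, a j = a i * ((∑ j ∈ s, a j) / 2) := by ring
    _ ≤ a i * Rnd N B := mul_le_mul_of_nonneg_left half_sum_le_Rnd (ha i hi)

theorem stmt_12_general {U M P : Type*} [Fintype U] [DecidableEq M] [DecidableEq P]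
    (mu : U → M) (pu : U → P) (Nsf : ℕ) (hNsf : 2 ≤ Nsf)
    (xh yAh : U → ℝ) (Ah : P → ℝ) (Nh : M → ℝ)
    (hx : ∀ u, 0 ≤ xh u) (hyA : ∀ u, 0 ≤ yAh u)
    (hX : ∀ m, ∑ u ∈ univ.filter (fun u => mu u = m), xh u ≤ Nh m)
    (hYA : ∀ p, ∑ u ∈ univ.filter (fun u => pu u = p), yAh u ≤ Ah p)
    (macroAssoc : U → Prop) [DecidablePred macroAssoc]
    (Nstar : M → ℤ) (hNstar : ∀ m, Nstar m = Rnd Nsf (Nh m))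
    (Astar : P → ℤ) (hAstar : ∀ p, Astar p = Rnd Nsf (Ah p))
    (Xm : M → ℝ)
    (hXm : ∀ m, Xm m = ∑ u ∈ univ.filter (fun u => mu u = m ∧ macroAssoc u), xh u)
    (YA : P → ℝ)
    (hYAdef : ∀ p, YA p = ∑ u ∈ univ.filter (fun u => pu u = p ∧ ¬ macroAssoc u), yAh u)
    (hXmpos : ∀ u, macroAssoc u → 0 < Xm (mu u)) (hYApos : ∀ u, ¬ macroAssoc u → 0 < YA (pu u))
    (xstar yAstar : U → ℝ)
    (hxstar : ∀ u, xstar u =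
      if macroAssoc u then xh u * (Nstar (mu u) : ℝ) / Xm (mu u) else 0)
    (hyAstar : ∀ u, yAstar u =
      if macroAssoc u then 0 else yAh u * (Astar (pu u) : ℝ) / YA (pu u)) :
    (∀ u, macroAssoc u → xh u / 2 ≤ xstar u) ∧
    (∀ u, ¬ macroAssoc u → yAh u / 2 ≤ yAstar u) := by
  refine ⟨fun u hu ↦ ?_, fun u hu ↦ ?_⟩
  · rw [hxstar, if_pos hu, hNstar, hXm]
    exact half_le_mul_Rnd_div_sum hNsf (monotone_filter_right univ fun _ _ h ↦ h.1)
      (fun v _ ↦ hx v) (hX (mu u)) (hXm (mu u) ▸ hXmpos u hu) (by simp)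
  · rw [hyAstar, if_neg hu, hAstar, hYAdef]
    exact half_le_mul_Rnd_div_sum hNsf (monotone_filter_right univ fun _ _ h ↦ h.1)
      (fun v _ ↦ hyA v) (hYA (pu u)) (hYAdef (pu u) ▸ hYApos u hu) (by simp)

/-- Airtime preservation under rounding: in the setting of the Algorithm 2 construction
with `N_sf ≥ 4` (and even), every macro-associated UE keeps at least half of its
relaxed airtime, `x* u ≥ x̂ u / 2`, and every pico-associated UE keeps at least half of
its relaxed ABS airtime, `yᴬ* u ≥ ŷᴬ u / 2`. -/
theorem stmt_12 {U M P : Type*} [Fintype U] [Fintype M] [Fintype P]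
    [DecidableEq M] [DecidableEq P]
    (mu : U → M) (pu : U → P) (rMac rPicoABS rPico : U → ℝ)
    (hrMac : ∀ u, 0 < rMac u) (hrPicoABS : ∀ u, 0 < rPicoABS u)
    (hrPico : ∀ u, 0 < rPico u)
    (Ip : P → Finset M) (Nsf : ℕ) (hNsf : 0 < Nsf) (hEven : Even Nsf)
    (hNsf4 : 4 ≤ Nsf)
    (xh yAh ynAh Rh : U → ℝ) (Ah : P → ℝ) (Nh : M → ℝ)
    (hx : ∀ u, 0 ≤ xh u) (hyA : ∀ u, 0 ≤ yAh u) (hynA : ∀ u, 0 ≤ ynAh u)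
    (hR : ∀ u, 0 ≤ Rh u) (hA : ∀ p, 0 ≤ Ah p) (hN : ∀ m, 0 ≤ Nh m)
    (hT : ∀ u, Rh u ≤ rMac u * xh u + rPicoABS u * yAh u + rPico u * ynAh u)
    (hI : ∀ p, ∀ m ∈ Ip p, Ah p + Nh m ≤ (Nsf : ℝ))
    (hX : ∀ m, ∑ u ∈ univ.filter (fun u => mu u = m), xh u ≤ Nh m)
    (hYA : ∀ p, ∑ u ∈ univ.filter (fun u => pu u = p), yAh u ≤ Ah p)
    (hY : ∀ p, ∑ u ∈ univ.filter (fun u => pu u = p), (yAh u + ynAh u) ≤ (Nsf : ℝ))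
    (hAub : ∀ p, Ah p ≤ (Nsf : ℝ)) (hNub : ∀ m, Nh m ≤ (Nsf : ℝ))
    -- Algorithm 2 construction
    (macroAssoc : U → Prop) [DecidablePred macroAssoc]
    (hAssoc : ∀ u, macroAssoc u ↔
      rPicoABS u * yAh u + rPico u * ynAh u < rMac u * xh u)
    (Nstar : M → ℤ) (hNstar : ∀ m, Nstar m = Rnd Nsf (Nh m))
    (Astar : P → ℤ) (hAstar : ∀ p, Astar p = Rnd Nsf (Ah p))
    (Xm : M → ℝ)
    (hXm : ∀ m, Xm m = ∑ u ∈ univ.filter (fun u => mu u = m ∧ macroAssoc u), xh u)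
    (YA : P → ℝ)
    (hYAdef : ∀ p, YA p = ∑ u ∈ univ.filter (fun u => pu u = p ∧ ¬ macroAssoc u), yAh u)
    (hXmpos : ∀ m, 0 < Xm m) (hYApos : ∀ p, 0 < YA p)
    (xstar yAstar : U → ℝ)
    (hxstar : ∀ u, xstar u =
      if macroAssoc u then xh u * (Nstar (mu u) : ℝ) / Xm (mu u) else 0)
    (hyAstar : ∀ u, yAstar u =
      if macroAssoc u then 0 else yAh u * (Astar (pu u) : ℝ) / YA (pu u)) :
    (∀ u, macroAssoc u → xh u / 2 ≤ xstar u) ∧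
    (∀ u, ¬ macroAssoc u → yAh u / 2 ≤ yAstar u) := by
  exact stmt_12_general mu pu Nsf (by lia) xh yAh Ah Nh hx hyA hX hYA macroAssoc _ hNstar _ hAstar
    _ hXm _ hYAdef (fun _ _ ↦ hXmpos _) (fun _ _ ↦ hYApos _) _ _ hxstar hyAstar
end
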